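/- arXiv:2011.09973 — 3 statements merged into one kernel-verified Lean document; each statement's English description precedes it below -/
import Mathlib

section
/- Let η > 0, let N ∈ ℕ with N ≥ 1, and let G_0, …, G_{N−1} be symmetric positive semidefinite d×d matrices satisfying 0 ⪯ η·G_t ⪯ (1/2)·I for every t. Define S_0 := log(k/d)·I and S_{t+1} := S_t + η·G_t, and for every t ≥ 0 let Y_t ∈ 𝒴 be the unique minimizer over 𝒴 of Y ↦ r(Y) − ⟨S_t, Y⟩ (so Y_0 = (k/d)·I). Then for every U ∈ 𝒴: (1/N)·∑_{t=0}^{N−1} ⟨G_t, U⟩ ≤ (2/N)·∑_{t=0}^{N−1} ⟨G_t, Y_t⟩ + k·log(d)/(η·N). -/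
open Finset

/-- The `k`-Fantope: symmetric matrices `Y` with `0 ⪯ Y ⪯ I` and `Tr(Y) = k`. -/
def Fantope (d k : ℕ) : Set (Matrix (Fin d) (Fin d) ℝ) :=
  {Y | Y.PosSemidef ∧ ((1 : Matrix (Fin d) (Fin d) ℝ) - Y).PosSemidef ∧
    Y.trace = (k : ℝ)}

/-- The matrix entropy regularizer `r(Y) = ∑_j (λ_j(Y)·log λ_j(Y) − λ_j(Y))`
(with the convention `0 · log 0 = 0`, as in `Real.log 0 = 0`). -/
noncomputable def matEntropy {d : ℕ} (Y : Matrix (Fin d) (Fin d) ℝ) : ℝ := by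
  classical
  exact if h : Y.IsHermitian then
    ∑ j, (h.eigenvalues j * Real.log (h.eigenvalues j) - h.eigenvalues j)
  else 0

/-- Trace inner product `⟨A, B⟩ = Tr(A·B)` on symmetric matrices. -/
def minner {d : ℕ} (A B : Matrix (Fin d) (Fin d) ℝ) : ℝ := (A * B).trace

def sp {d : ℕ} (U : Matrix (Fin d) (Fin d) ℝ) (a : Fin d → ℝ) : Matrix (Fin d) (Fin d) ℝ :=
  U * Matrix.diagonal a * U.transpose

lemma sp_trace_mul {d : ℕ} (U V : Matrix (Fin d) (Fin d) ℝ) (a b : Fin d → ℝ) :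
    (sp U a * sp V b).trace = ∑ i, ∑ j, ((U.transpose * V) i j)^2 * (a i * b j) := by
  have h : (sp U a * sp V b).trace =
      (Matrix.diagonal a * (U.transpose * V) * (Matrix.diagonal b * (U.transpose * V).transpose)).trace := by
    unfold sp
    rw [Matrix.transpose_mul, Matrix.transpose_transpose]
    rw [Matrix.mul_assoc, Matrix.mul_assoc, Matrix.trace_mul_comm]
    simp only [Matrix.mul_assoc]
  rw [h, Matrix.trace]
  refine Finset.sum_congr rfl fun i _ => ?_
  rw [Matrix.diag_apply, Matrix.mul_apply]
  refine Finset.sum_congr rfl fun j _ => ?_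
  rw [Matrix.diagonal_mul, Matrix.diagonal_mul, Matrix.transpose_apply]
  ring

lemma sp_mul {d : ℕ} (U : Matrix (Fin d) (Fin d) ℝ) (hU : U.transpose * U = 1) (a b : Fin d → ℝ) :
    sp U a * sp U b = sp U (fun i => a i * b i) := by
  unfold sp
  calc _ = U * Matrix.diagonal a * (U.transpose * U) * Matrix.diagonal b * U.transpose := by
        simp only [Matrix.mul_assoc]
    _ = _ := by
        rw [hU, Matrix.mul_one, Matrix.mul_assoc U, Matrix.diagonal_mul_diagonal]

lemma sp_herm {d : ℕ} (U : Matrix (Fin d) (Fin d) ℝ) (a : Fin d → ℝ) : (sp U a).transpose = sp U a := by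
  unfold sp
  simp [Matrix.transpose_mul, Matrix.mul_assoc]

lemma sp_trace {d : ℕ} (U : Matrix (Fin d) (Fin d) ℝ) (hU : U.transpose * U = 1) (a : Fin d → ℝ) :
    (sp U a).trace = ∑ i, a i := by
  unfold sp
  rw [Matrix.trace_mul_comm, ← Matrix.mul_assoc, hU, Matrix.one_mul, Matrix.trace_diagonal]

lemma orth_row {d : ℕ} (C : Matrix (Fin d) (Fin d) ℝ) (h : C * C.transpose = 1) (i : Fin d) :
    ∑ j, (C i j)^2 = 1 := by
  have := congrFun (congrFun h i) i
  rw [Matrix.mul_apply] at this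
  simpa [sq] using this

lemma orth_sum_row {d : ℕ} (C : Matrix (Fin d) (Fin d) ℝ) (h : C * C.transpose = 1) (f : Fin d → ℝ) :
    ∑ i, ∑ j, (C i j)^2 * f i = ∑ i, f i := by
  refine Finset.sum_congr rfl fun i _ => ?_
  rw [← Finset.sum_mul, orth_row C h, one_mul]

lemma orth_sum_col {d : ℕ} (C : Matrix (Fin d) (Fin d) ℝ) (h : C.transpose * C = 1) (f : Fin d → ℝ) :
    ∑ i, ∑ j, (C i j)^2 * f j = ∑ i, f i := by
  rw [Finset.sum_comm]
  have := orth_sum_row C.transpose (by simpa using h) f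
  simpa using this

lemma orth_C {d : ℕ} (U V : Matrix (Fin d) (Fin d) ℝ) (hU : U.transpose * U = 1) (hV : V.transpose * V = 1) :
    (U.transpose * V) * (U.transpose * V).transpose = 1 ∧
    (U.transpose * V).transpose * (U.transpose * V) = 1 := by
  have hU' := mul_eq_one_comm.mp hU
  have hV' := mul_eq_one_comm.mp hV
  rw [Matrix.transpose_mul, Matrix.transpose_transpose]
  constructor
  · rw [Matrix.mul_assoc, ← Matrix.mul_assoc V, hV', Matrix.one_mul, hU]
  · rw [Matrix.mul_assoc, ← Matrix.mul_assoc U, hU', Matrix.one_mul, hV]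

lemma sp_phi {d : ℕ} (U V : Matrix (Fin d) (Fin d) ℝ) (hU : U.transpose * U = 1) (hV : V.transpose * V = 1)
    (a b : Fin d → ℝ) (h : sp U a = sp V b) (φ : ℝ → ℝ) : ∑ i, φ (a i) = ∑ i, φ (b i) := by
  obtain ⟨h1, h2⟩ := orth_C U V hU hV
  rw [← orth_sum_row _ h1 (fun i => φ (a i)), ← orth_sum_col _ h2 (fun i => φ (b i))]
  have hc : Matrix.diagonal a * (U.transpose * V) = (U.transpose * V) * Matrix.diagonal b := by
    calc _ = (U.transpose * U) * Matrix.diagonal a * (U.transpose * V) := by rw [hU, Matrix.one_mul]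
      _ = U.transpose * sp U a * V := by unfold sp; simp only [Matrix.mul_assoc]
      _ = U.transpose * V * Matrix.diagonal b * (V.transpose * V) := by
          rw [h]; unfold sp; simp only [Matrix.mul_assoc]
      _ = _ := by rw [hV, Matrix.mul_one]
  refine Finset.sum_congr rfl fun i _ => Finset.sum_congr rfl fun j _ => ?_
  have := congrFun (congrFun hc i) j
  rw [Matrix.diagonal_mul, Matrix.mul_diagonal] at this
  by_cases h0 : (U.transpose * V) i j = 0
  · simp [h0]
  · have : a i = b j := by
      apply mul_right_cancel₀ h0; rw [this]; ring
    rw [this]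

lemma herm_sp {d : ℕ} (Y : Matrix (Fin d) (Fin d) ℝ) (h : Y.IsHermitian) :
    ∃ U : Matrix (Fin d) (Fin d) ℝ, U.transpose * U = 1 ∧ Y = sp U h.eigenvalues := by
  refine ⟨h.eigenvectorUnitary, ?_, ?_⟩
  · have := Matrix.UnitaryGroup.star_mul_self h.eigenvectorUnitary
    simpa [Matrix.star_eq_conjTranspose] using this
  · have := h.spectral_theorem
    rw [Unitary.conjStarAlgAut_apply] at this
    conv_lhs => rw [this]
    unfold sp
    simp only [Matrix.star_eq_conjTranspose, Matrix.conjTranspose_eq_transpose_of_trivial]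
    rfl

lemma mat_ineq {d : ℕ} (A P Q : Matrix (Fin d) (Fin d) ℝ) (hA : A.PosSemidef)
    (hA2 : (((1 : ℝ) / 2) • (1 : Matrix (Fin d) (Fin d) ℝ) - A).PosSemidef)
    (hP : P.transpose = P) (hQ : Q.transpose = Q) :
    (A * (P * P)).trace ≤ ((P - Q) * (P - Q)).trace + 2 * (A * (Q * Q)).trace := by
  have key : ∀ B E : Matrix (Fin d) (Fin d) ℝ, B.PosSemidef → E.transpose = E →
      0 ≤ (B * (E * E)).trace := by
    intro B E hB hE
    have := (hB.conjTranspose_mul_mul_same E).trace_nonneg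
    rw [Matrix.conjTranspose_eq_transpose_of_trivial, hE, Matrix.mul_assoc, Matrix.trace_mul_comm,
      Matrix.mul_assoc] at this
    exact this
  have h1 := key A (Q - (P - Q)) hA (by simp [hP, hQ])
  have h2 := key _ (P - Q) hA2 (by simp [hP, hQ])
  have e1 : (Q - (P - Q)) * (Q - (P - Q)) = 2 • (Q * Q) + 2 • ((P - Q) * (P - Q)) - P * P := by
    noncomm_ring
  rw [e1, Matrix.mul_sub, Matrix.mul_add, Matrix.trace_sub, Matrix.trace_add, Matrix.mul_smul,
    Matrix.mul_smul, Matrix.trace_smul, Matrix.trace_smul] at h1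
  rw [Matrix.sub_mul, Matrix.trace_sub, Matrix.smul_mul, Matrix.one_mul, Matrix.trace_smul] at h2
  simp only [nsmul_eq_mul, smul_eq_mul, Nat.cast_ofNat] at h1 h2
  linarith

lemma scalar_ineq (m l : ℝ) (hm : 0 ≤ m) :
    (√m - √(Real.exp l))^2 ≤ m * Real.log m - m - m * l + Real.exp l := by
  have e : √(Real.exp l) = Real.exp (l/2) := by
    rw [Real.exp_half]
  have e2 : Real.exp l = Real.exp (l/2) ^2 := by rw [← e, Real.sq_sqrt (Real.exp_pos _).le]
  rcases hm.eq_or_lt with h | h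
  · subst h
    rw [e, e2]; simp
  · have hs := Real.sqrt_pos.2 h
    rw [e, e2]
    have h3 := Real.log_le_sub_one_of_pos (div_pos (Real.exp_pos (l/2)) hs)
    rw [Real.log_div (Real.exp_pos _).ne' hs.ne', Real.log_exp, Real.log_sqrt hm] at h3
    have h4 : m * (l/2 - Real.log m/2) ≤ m * (Real.exp (l/2) / √m - 1) :=
      mul_le_mul_of_nonneg_left h3 hm
    have h5 : m * (Real.exp (l/2) / √m - 1) = √m * Real.exp (l/2) - m := by
      field_simp
      linear_combination (-Real.exp (l/2)) * Real.sq_sqrt hm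
    nlinarith [Real.sq_sqrt hm]

lemma exists_tau {d k : ℕ} (hd : 1 ≤ d) (hk1 : 1 ≤ k) (hkd : k ≤ d) (s : Fin d → ℝ) :
    ∃ τ : ℝ, ∑ j, Real.exp (min 0 (s j - τ)) = k := by
  have hne : Nonempty (Fin d) := ⟨⟨0, hd⟩⟩
  have hc : Continuous (fun τ : ℝ => ∑ j, Real.exp (min 0 (s j - τ))) := by fun_prop
  obtain ⟨jm, hjm⟩ := Finite.exists_min s
  obtain ⟨jM, hjM⟩ := Finite.exists_max s
  have hd0 : (0:ℝ) < d := by exact_mod_cast hd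
  have := mem_range_of_exists_le_of_exists_ge (c := (k:ℝ)) hc
    ⟨s jM + Real.log d, ?_⟩ ⟨s jm, ?_⟩
  · exact this
  · calc _ ≤ ∑ j : Fin d, (1/(d:ℝ)) := by
          refine Finset.sum_le_sum fun j _ => ?_
          rw [one_div, ← Real.exp_log (inv_pos.2 hd0), Real.log_inv]
          apply Real.exp_le_exp.2
          refine (min_le_right _ _).trans ?_
          linarith [hjM j]
      _ = 1 := by simp [hd0.ne']
      _ ≤ k := by exact_mod_cast hk1
  · calc (k:ℝ) ≤ d := by exact_mod_cast hkd
      _ = ∑ j : Fin d, (1:ℝ) := by simp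
      _ ≤ _ := by
          refine Finset.sum_le_sum fun j _ => ?_
          rw [min_eq_left (by linarith [hjm j])]; simp

lemma matEntropy_sp {d : ℕ} (V : Matrix (Fin d) (Fin d) ℝ) (hV : V.transpose * V = 1)
    (b : Fin d → ℝ) : matEntropy (sp V b) = ∑ j, (b j * Real.log (b j) - b j) := by
  have h : (sp V b).IsHermitian := by
    rw [Matrix.IsHermitian, Matrix.conjTranspose_eq_transpose_of_trivial, sp_herm]
  obtain ⟨U, hU, hY⟩ := herm_sp _ h
  unfold matEntropy
  rw [dif_pos h]
  exact sp_phi U V hU hV _ _ hY.symm (fun x => x * Real.log x - x)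

lemma fantope_sp {d k : ℕ} (Y : Matrix (Fin d) (Fin d) ℝ) (hY : Y ∈ Fantope d k) :
    ∃ (U : Matrix (Fin d) (Fin d) ℝ) (m : Fin d → ℝ), U.transpose * U = 1 ∧ Y = sp U m ∧
      (∀ i, 0 ≤ m i) ∧ (∀ i, m i ≤ 1) ∧ ∑ i, m i = k := by
  obtain ⟨h1, h2, h3⟩ := hY
  obtain ⟨U, hU, hYU⟩ := herm_sp Y h1.1
  refine ⟨U, h1.1.eigenvalues, hU, hYU, h1.eigenvalues_nonneg, fun i => ?_, ?_⟩
  · have h4 := (h2.conjTranspose_mul_mul_same U).diag_nonneg (i := i)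
    have e : U.conjTranspose * (1 - Y) * U = 1 - Matrix.diagonal h1.1.eigenvalues := by
      rw [Matrix.conjTranspose_eq_transpose_of_trivial, Matrix.mul_sub, Matrix.sub_mul,
        Matrix.mul_one, hU]
      congr 1
      conv_lhs => rw [hYU]
      unfold sp
      calc _ = (U.transpose * U) * Matrix.diagonal h1.1.eigenvalues * (U.transpose * U) := by
            simp only [Matrix.mul_assoc]
        _ = _ := by rw [hU, Matrix.one_mul, Matrix.mul_one]
    rw [e] at h4
    simpa using h4
  · rw [← sp_trace U hU, ← hYU, h3]

lemma sp_fantope {d k : ℕ} (V : Matrix (Fin d) (Fin d) ℝ) (hV : V.transpose * V = 1)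
    (b : Fin d → ℝ) (h0 : ∀ i, 0 ≤ b i) (h1 : ∀ i, b i ≤ 1) (hk : ∑ i, b i = k) :
    sp V b ∈ Fantope d k := by
  have key : ∀ c : Fin d → ℝ, (∀ i, 0 ≤ c i) → (sp V c).PosSemidef := by
    intro c hc
    have := (Matrix.PosSemidef.diagonal (n := Fin d) (d := c) hc).mul_mul_conjTranspose_same V
    rwa [Matrix.conjTranspose_eq_transpose_of_trivial] at this
  refine ⟨key b h0, ?_, by rw [sp_trace V hV, hk]⟩
  have e : 1 - sp V b = sp V (fun i => 1 - b i) := by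
    have : Matrix.diagonal (fun i => 1 - b i) = 1 - Matrix.diagonal b := by
      rw [← Matrix.diagonal_one, Matrix.diagonal_sub]
    unfold sp
    rw [this, Matrix.mul_sub, Matrix.sub_mul, Matrix.mul_one, mul_eq_one_comm.mp hV]
  rw [e]
  exact key _ fun i => sub_nonneg.2 (h1 i)

lemma key_lemma {d k : ℕ} (hd : 1 ≤ d) (hk1 : 1 ≤ k) (hkd : k ≤ d)
    (S : Matrix (Fin d) (Fin d) ℝ) (hS : S.IsHermitian) :
    ∃ Q : Matrix (Fin d) (Fin d) ℝ, Q.transpose = Q ∧ Q * Q ∈ Fantope d k ∧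
      ∀ Y ∈ Fantope d k, ∃ P : Matrix (Fin d) (Fin d) ℝ, P.transpose = P ∧ P * P = Y ∧
        matEntropy (Q * Q) - minner S (Q * Q) + ((P - Q) * (P - Q)).trace ≤
          matEntropy Y - minner S Y := by
  obtain ⟨V, hV, hSV⟩ := herm_sp S hS
  generalize hS.eigenvalues = s at hSV
  obtain ⟨τ, hτ⟩ := exists_tau hd hk1 hkd s
  let l : Fin d → ℝ := fun j => min 0 (s j - τ)
  let b : Fin d → ℝ := fun j => Real.exp (l j)
  have hQQ : sp V (fun j => √(b j)) * sp V (fun j => √(b j)) = sp V b := by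
    rw [sp_mul V hV]
    congr 1
    funext j
    exact Real.mul_self_sqrt (Real.exp_pos _).le
  refine ⟨sp V (fun j => √(b j)), sp_herm _ _, ?_, ?_⟩
  · rw [hQQ]
    refine sp_fantope V hV b (fun i => (Real.exp_pos _).le) (fun i => ?_) hτ
    exact Real.exp_le_one_iff.2 (min_le_left _ _)
  intro Y hY
  obtain ⟨U, m, hU, hYU, hm0, hm1, hmk⟩ := fantope_sp Y hY
  have hPP : sp U (fun j => √(m j)) * sp U (fun j => √(m j)) = sp U m := by
    rw [sp_mul U hU]
    congr 1
    funext j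
    exact Real.mul_self_sqrt (hm0 j)
  refine ⟨sp U (fun j => √(m j)), sp_herm _ _, by rw [hPP, hYU], ?_⟩
  obtain ⟨hC1, hC2⟩ := orth_C U V hU hV
  have e1 : ((sp U (fun j => √(m j)) - sp V (fun j => √(b j))) *
      (sp U (fun j => √(m j)) - sp V (fun j => √(b j)))).trace =
      ∑ i, m i + ∑ j, b j - 2 * (sp U (fun j => √(m j)) * sp V (fun j => √(b j))).trace := by
    rw [Matrix.sub_mul, Matrix.mul_sub, Matrix.mul_sub, hPP, hQQ, Matrix.trace_sub,
      Matrix.trace_sub, Matrix.trace_sub, sp_trace U hU, sp_trace V hV,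
      Matrix.trace_mul_comm (sp V _)]
    ring
  have e2 : minner S (sp V b) = ∑ j, s j * b j := by
    rw [minner, hSV, sp_mul V hV, sp_trace V hV]
  have e3 : minner S Y = (sp U m * sp V s).trace := by
    rw [minner, hSV, hYU, Matrix.trace_mul_comm]
  rw [e1, e3, hQQ, e2, matEntropy_sp V hV, hYU, matEntropy_sp U hU, sp_trace_mul, sp_trace_mul]
  generalize U.transpose * V = C at hC1 hC2
  rw [← orth_sum_row C hC1 m, ← orth_sum_col C hC2 b, ← orth_sum_col C hC2 (fun j => s j * b j),
    ← orth_sum_col C hC2 (fun j => b j * Real.log (b j) - b j),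
    ← orth_sum_row C hC1 (fun i => m i * Real.log (m i) - m i)]
  have hz : ∑ i, ∑ j, (C i j)^2 * (τ * m i) - ∑ i, ∑ j, (C i j)^2 * (τ * b j) = 0 := by
    rw [orth_sum_row C hC1, orth_sum_col C hC2, ← Finset.mul_sum, ← Finset.mul_sum, hmk]
    have : ∑ j, b j = k := hτ
    rw [this, sub_self]
  have main : ∑ i, ∑ j, ((C i j)^2 * (b j * Real.log (b j) - b j) - (C i j)^2 * (s j * b j)
      + ((C i j)^2 * m i + (C i j)^2 * b j - 2 * ((C i j)^2 * (√(m i) * √(b j))))) ≤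
      ∑ i, ∑ j, ((C i j)^2 * (m i * Real.log (m i) - m i) - (C i j)^2 * (m i * s j)
        + ((C i j)^2 * (τ * m i) - (C i j)^2 * (τ * b j))) := by
    refine Finset.sum_le_sum fun i _ => Finset.sum_le_sum fun j _ => ?_
    have h := scalar_ineq (m i) (l j) (hm0 i)
    change (√(m i) - √(b j))^2 ≤ m i * Real.log (m i) - m i - m i * l j + b j at h
    have hb0 : 0 ≤ b j := (Real.exp_pos _).le
    have hlog : Real.log (b j) = l j := Real.log_exp _
    have hg : 0 ≤ (s j - τ - l j) * (b j - m i) := by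
      rcases le_total 0 (s j - τ) with hs | hs
      · have hl : l j = 0 := min_eq_left hs
        have hb : b j = 1 := by simp [b, hl]
        rw [hl, hb]
        exact mul_nonneg (by linarith) (by linarith [hm1 i])
      · have hl : l j = s j - τ := min_eq_right hs
        rw [hl, sub_self, zero_mul]
    have h2 : (b j * l j - b j) - s j * b j + (m i + b j - 2 * (√(m i) * √(b j))) ≤
        (m i * Real.log (m i) - m i) - m i * s j + (τ * m i - τ * b j) := by
      nlinarith [Real.sq_sqrt hb0, Real.sq_sqrt (hm0 i)]
    rw [hlog]
    have := mul_le_mul_of_nonneg_left h2 (sq_nonneg (C i j))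
    linarith
  simp only [Finset.sum_add_distrib, Finset.sum_sub_distrib, ← Finset.mul_sum] at main hz ⊢
  linarith

lemma entropy_upper {d k : ℕ} (U : Matrix (Fin d) (Fin d) ℝ) (hU : U ∈ Fantope d k) :
    matEntropy U ≤ -k := by
  obtain ⟨V, m, hV, hY, h0, h1, hk⟩ := fantope_sp U hU
  rw [hY, matEntropy_sp V hV, ← hk, ← Finset.sum_neg_distrib]
  refine Finset.sum_le_sum fun i _ => ?_
  linarith [Real.mul_log_nonpos (h0 i) (h1 i)]

lemma entropy_lower {d k : ℕ} (hd : 1 ≤ d) (hk1 : 1 ≤ k)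
    (U : Matrix (Fin d) (Fin d) ℝ) (hU : U ∈ Fantope d k) :
    -k + k * Real.log ((k:ℝ)/d) ≤ matEntropy U := by
  obtain ⟨V, m, hV, hY, h0, h1, hk⟩ := fantope_sp U hU
  have hd0 : (0:ℝ) < d := by exact_mod_cast hd
  have hk0 : (0:ℝ) < k := by exact_mod_cast hk1
  rw [hY, matEntropy_sp V hV]
  have h : ∀ i, m i * Real.log ((k:ℝ)/d) - (k:ℝ)/d ≤ m i * Real.log (m i) - m i := by
    intro i
    have := scalar_ineq (m i) (Real.log ((k:ℝ)/d)) (h0 i)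
    rw [Real.exp_log (div_pos hk0 hd0)] at this
    nlinarith [sq_nonneg (√(m i) - √((k:ℝ)/d))]
  refine le_trans (le_of_eq ?_) (Finset.sum_le_sum fun i _ => h i)
  rw [Finset.sum_sub_distrib, ← Finset.sum_mul, hk]
  simp
  field_simp
  ring

lemma step_lemma {d k : ℕ} (hd : 1 ≤ d) (hk1 : 1 ≤ k) (hkd : k ≤ d)
    (S A X Y : Matrix (Fin d) (Fin d) ℝ) (hS : S.IsHermitian) (hA : A.PosSemidef)
    (hA2 : (((1 : ℝ) / 2) • (1 : Matrix (Fin d) (Fin d) ℝ) - A).PosSemidef)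
    (hX : X ∈ Fantope d k) (hY : Y ∈ Fantope d k)
    (hmin : ∀ Z ∈ Fantope d k, matEntropy X - minner S X ≤ matEntropy Z - minner S Z) :
    matEntropy X - minner S X - 2 * minner A X ≤ matEntropy Y - minner S Y - minner A Y := by
  obtain ⟨Q, hQ, hQF, hq⟩ := key_lemma hd hk1 hkd S hS
  have hXQ : X = Q * Q := by
    obtain ⟨P, hP, hPX, hle⟩ := hq X hX
    have h1 := hmin _ hQF
    have hT : (P - Q).conjTranspose = P - Q := by
      rw [Matrix.conjTranspose_eq_transpose_of_trivial, Matrix.transpose_sub, hP, hQ]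
    have h2 := (Matrix.posSemidef_conjTranspose_mul_self (P - Q)).trace_nonneg
    have h3 : ((P - Q).conjTranspose * (P - Q)).trace = 0 := by
      rw [hT] at h2 ⊢
      linarith
    rw [Matrix.trace_conjTranspose_mul_self_eq_zero_iff, sub_eq_zero] at h3
    rw [← hPX, h3]
  obtain ⟨P, hP, hPY, hle⟩ := hq Y hY
  have := mat_ineq A P Q hA hA2 hP hQ
  rw [hPY, ← hXQ] at this
  rw [← hXQ] at hle
  simp only [minner] at hle ⊢
  linarith

/-- Regret bound for the Ky Fan matrix multiplicative weights procedure. -/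
theorem kfmmw_regret {d k : ℕ} (hd : 1 ≤ d) (hk1 : 1 ≤ k) (hkd : k ≤ d)
    (η : ℝ) (hη : 0 < η) (N : ℕ) (hN : 1 ≤ N)
    (G : ℕ → Matrix (Fin d) (Fin d) ℝ)
    (hGpsd : ∀ t, t < N → (G t).PosSemidef)
    (hGub : ∀ t, t < N →
      (((1 : ℝ) / 2) • (1 : Matrix (Fin d) (Fin d) ℝ) - η • G t).PosSemidef)
    (S : ℕ → Matrix (Fin d) (Fin d) ℝ)
    (hS0 : S 0 = Real.log ((k : ℝ) / (d : ℝ)) • (1 : Matrix (Fin d) (Fin d) ℝ))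
    (hSrec : ∀ t, S (t + 1) = S t + η • G t)
    (Y : ℕ → Matrix (Fin d) (Fin d) ℝ)
    (hYmem : ∀ t, Y t ∈ Fantope d k)
    (hYmin : ∀ t, ∀ Z ∈ Fantope d k,
      matEntropy (Y t) - minner (S t) (Y t) ≤ matEntropy Z - minner (S t) Z) :
    ∀ U ∈ Fantope d k,
      (1 / (N : ℝ)) * ∑ t ∈ Finset.range N, minner (G t) U ≤
        (2 / (N : ℝ)) * ∑ t ∈ Finset.range N, minner (G t) (Y t) +
          (k : ℝ) * Real.log d / (η * N) := by
  intro U hU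
  have hd0 : (0:ℝ) < d := by exact_mod_cast hd
  have hk0 : (0:ℝ) < k := by exact_mod_cast hk1
  have hN0 : (0:ℝ) < N := by exact_mod_cast hN
  have hrec : ∀ t Z, minner (S (t+1)) Z = minner (S t) Z + η * minner (G t) Z := by
    intro t Z
    rw [hSrec, minner, Matrix.add_mul, Matrix.trace_add, Matrix.smul_mul, Matrix.trace_smul]
    rfl
  have hη' : ∀ t Z, minner (η • G t) Z = η * minner (G t) Z := by
    intro t Z
    rw [minner, Matrix.smul_mul, Matrix.trace_smul]
    rfl
  have h0 : ∀ Z ∈ Fantope d k, minner (S 0) Z = k * Real.log ((k:ℝ)/d) := by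
    intro Z hZ
    rw [hS0, minner, Matrix.smul_mul, Matrix.trace_smul, Matrix.one_mul, hZ.2.2, smul_eq_mul,
      mul_comm]
  have hSh : ∀ t, t ≤ N → (S t).IsHermitian := by
    intro t
    induction t with
    | zero =>
      intro _
      rw [hS0, Matrix.IsHermitian, Matrix.conjTranspose_eq_transpose_of_trivial,
        Matrix.transpose_smul, Matrix.transpose_one]
    | succ t ih =>
      intro ht
      rw [hSrec]
      exact (ih (by omega)).add ((hGpsd t (by omega)).smul hη.le).1
  have hsum : ∀ n, n ≤ N → matEntropy (Y 0) - minner (S 0) (Y 0)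
      - 2 * η * ∑ t ∈ Finset.range n, minner (G t) (Y t) ≤
      matEntropy (Y n) - minner (S n) (Y n) := by
    intro n
    induction n with
    | zero => intro _; simp
    | succ n ih =>
      intro hn
      have h1 := ih (by omega)
      have h2 := step_lemma hd hk1 hkd (S n) (η • G n) (Y n) (Y (n+1)) (hSh n (by omega))
        ((hGpsd n (by omega)).smul hη.le) (hGub n (by omega)) (hYmem n) (hYmem _) (hYmin n)
      rw [hη', hη'] at h2
      rw [Finset.sum_range_succ, hrec]
      linarith
  have hSU : ∀ n, minner (S n) U = minner (S 0) U + η * ∑ t ∈ Finset.range n, minner (G t) U := by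
    intro n
    induction n with
    | zero => simp
    | succ n ih => rw [hrec, ih, Finset.sum_range_succ]; ring
  have f1 := hsum N le_rfl
  have f2 := hYmin N U hU
  rw [hSU, h0 U hU] at f2
  rw [h0 _ (hYmem 0)] at f1
  have f3 := entropy_upper U hU
  have f4 := entropy_lower hd hk1 _ (hYmem 0)
  have f5 : -(k * Real.log ((k:ℝ)/d)) ≤ k * Real.log d := by
    rw [Real.log_div hk0.ne' hd0.ne']
    have : 0 ≤ Real.log k := Real.log_nonneg (by exact_mod_cast hk1)
    nlinarith
  have f6 : η * ∑ t ∈ Finset.range N, minner (G t) U ≤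
      2 * η * ∑ t ∈ Finset.range N, minner (G t) (Y t) + k * Real.log d := by linarith
  have e : (2 / (N : ℝ)) * ∑ t ∈ Finset.range N, minner (G t) (Y t) +
          (k : ℝ) * Real.log d / (η * N) - (1 / (N : ℝ)) * ∑ t ∈ Finset.range N, minner (G t) U
      = (2 * η * ∑ t ∈ Finset.range N, minner (G t) (Y t) + k * Real.log d
        - η * ∑ t ∈ Finset.range N, minner (G t) U) / (η * N) := by
    field_simp
  rw [← sub_nonneg, e]
  exact div_nonneg (by linarith) (by positivity)
end

section
/- Let S be a symmetric d×d matrix, G a symmetric positive semidefinite d×d matrix, and η > 0 with ‖η·G‖_op ≤ 1/2, where ‖·‖_op is the spectral norm. Then the Bregman divergence of r* satisfies V^{r*}_S(S + η·G) := r*(S + η·G) − r*(S) − ⟨∇r*(S), η·G⟩ ≤ ⟨η·G, ∇r*(S)⟩; equivalently, r*(S + η·G) − r*(S) ≤ 2·⟨η·G, ∇r*(S)⟩. -/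
open Finset

/-- `r*(S) = max_{Y ∈ 𝒴} (⟨S, Y⟩ − r(Y))`, the conjugate of the entropy over the Fantope. -/
noncomputable def rStar (d k : ℕ) (S : Matrix (Fin d) (Fin d) ℝ) : ℝ :=
  sSup ((fun Y => minner S Y - matEntropy Y) '' Fantope d k)

/-- The spectral (ℓ₂ operator) norm of a matrix. -/
noncomputable def opNorm {d : ℕ} (A : Matrix (Fin d) (Fin d) ℝ) : ℝ :=
  ‖Matrix.toEuclideanCLM (𝕜 := ℝ) A‖

namespace FantopeAux

open Matrix

variable {d : ℕ}

/-- Spectral functional calculus. -/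
noncomputable def fm {Z : Matrix (Fin d) (Fin d) ℝ} (h : Z.IsHermitian) (f : ℝ → ℝ) :
    Matrix (Fin d) (Fin d) ℝ :=
  (h.eigenvectorUnitary : Matrix (Fin d) (Fin d) ℝ) * diagonal (fun i => f (h.eigenvalues i)) *
    (h.eigenvectorUnitary : Matrix (Fin d) (Fin d) ℝ)ᴴ

/-- Overlap matrix. -/
noncomputable def ov {Z X : Matrix (Fin d) (Fin d) ℝ} (h : Z.IsHermitian) (h' : X.IsHermitian) :
    Matrix (Fin d) (Fin d) ℝ :=
  (h.eigenvectorUnitary : Matrix (Fin d) (Fin d) ℝ)ᴴ *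
    (h'.eigenvectorUnitary : Matrix (Fin d) (Fin d) ℝ)

lemma uu {Z : Matrix (Fin d) (Fin d) ℝ} (h : Z.IsHermitian) :
    (h.eigenvectorUnitary : Matrix (Fin d) (Fin d) ℝ)ᴴ *
      (h.eigenvectorUnitary : Matrix (Fin d) (Fin d) ℝ) = 1 :=
  Unitary.coe_star_mul_self h.eigenvectorUnitary

lemma uu' {Z : Matrix (Fin d) (Fin d) ℝ} (h : Z.IsHermitian) :
    (h.eigenvectorUnitary : Matrix (Fin d) (Fin d) ℝ) *
      (h.eigenvectorUnitary : Matrix (Fin d) (Fin d) ℝ)ᴴ = 1 :=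
  Unitary.coe_mul_star_self h.eigenvectorUnitary

lemma fm_id {Z : Matrix (Fin d) (Fin d) ℝ} (h : Z.IsHermitian) : fm h (fun x => x) = Z := by
  conv_rhs => rw [h.spectral_theorem]
  rfl

lemma fm_one {Z : Matrix (Fin d) (Fin d) ℝ} (h : Z.IsHermitian) : fm h (fun _ => 1) = 1 := by
  unfold fm
  rw [Matrix.diagonal_one, Matrix.mul_one, uu']

lemma fm_mul {Z : Matrix (Fin d) (Fin d) ℝ} (h : Z.IsHermitian) (f g : ℝ → ℝ) :
    fm h f * fm h g = fm h (fun x => f x * g x) := by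
  have := uu h
  unfold fm
  generalize (h.eigenvectorUnitary : Matrix (Fin d) (Fin d) ℝ) = U at *
  rw [← diagonal_mul_diagonal]
  calc _ = U * diagonal (fun i => f (h.eigenvalues i)) * (Uᴴ * U) *
        diagonal (fun i => g (h.eigenvalues i)) * Uᴴ := by simp only [Matrix.mul_assoc]
    _ = _ := by rw [this]; simp only [Matrix.mul_assoc, Matrix.one_mul]

lemma fm_herm {Z : Matrix (Fin d) (Fin d) ℝ} (h : Z.IsHermitian) (f : ℝ → ℝ) :
    (fm h f).IsHermitian := by
  unfold fm
  apply Matrix.isHermitian_mul_mul_conjTranspose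
  exact Matrix.isHermitian_diagonal _

lemma fm_trace {Z : Matrix (Fin d) (Fin d) ℝ} (h : Z.IsHermitian) (f : ℝ → ℝ) :
    (fm h f).trace = ∑ i, f (h.eigenvalues i) := by
  unfold fm
  rw [Matrix.trace_mul_comm, ← Matrix.mul_assoc, uu, Matrix.one_mul, Matrix.trace_diagonal]

lemma tr_fm {Z X : Matrix (Fin d) (Fin d) ℝ} (h : Z.IsHermitian) (h' : X.IsHermitian)
    (f g : ℝ → ℝ) : (fm h f * fm h' g).trace =
      ∑ i, ∑ j, (ov h h' i j) ^ 2 * (f (h.eigenvalues i) * g (h'.eigenvalues j)) := by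
  unfold fm ov
  generalize (h.eigenvectorUnitary : Matrix (Fin d) (Fin d) ℝ) = U
  generalize (h'.eigenvectorUnitary : Matrix (Fin d) (Fin d) ℝ) = V
  have : (U * diagonal (fun i => f (h.eigenvalues i)) * Uᴴ *
      (V * diagonal (fun i => g (h'.eigenvalues i)) * Vᴴ)).trace =
      (diagonal (fun i => f (h.eigenvalues i)) * (Uᴴ * V) *
        diagonal (fun i => g (h'.eigenvalues i)) * (Uᴴ * V)ᴴ).trace := by
    rw [conjTranspose_mul, conjTranspose_conjTranspose]
    simp only [Matrix.mul_assoc]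
    rw [Matrix.trace_mul_comm]
    simp only [Matrix.mul_assoc]
  rw [this]
  generalize Uᴴ * V = C
  simp only [Matrix.trace, Matrix.diag, Matrix.mul_apply (N := Cᴴ), Matrix.mul_diagonal,
    Matrix.diagonal_mul, conjTranspose_apply, star_trivial]
  refine Finset.sum_congr rfl fun i _ => Finset.sum_congr rfl fun j _ => ?_
  ring

lemma ov_zero {Z X : Matrix (Fin d) (Fin d) ℝ} (hZ : Z.PosSemidef) (h' : X.IsHermitian)
    {t : ℝ} (ht : 0 < t) (hs : (X - t • Z).PosSemidef) (i j : Fin d)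
    (hj : h'.eigenvalues j = 0) : (ov hZ.1 h' i j) ^ 2 * hZ.1.eigenvalues i = 0 := by
  classical
  let δ : Matrix (Fin d) (Fin d) ℝ := (h'.eigenvectorUnitary : Matrix (Fin d) (Fin d) ℝ)
  have hX : (δᴴ * X * δ) j j = 0 := by
    have : δᴴ * X * δ = diagonal h'.eigenvalues := by
      conv_lhs => rw [← fm_id h']
      unfold fm
      have := uu h'
      change δᴴ * δ = 1 at this
      change δᴴ * (δ * diagonal h'.eigenvalues * δᴴ) * δ = _
      calc _ = (δᴴ * δ) * diagonal h'.eigenvalues * (δᴴ * δ) := by simp only [Matrix.mul_assoc]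
        _ = _ := by rw [this]; simp
    rw [this, diagonal_apply_eq, hj]
  have h1 : 0 ≤ (δᴴ * (X - t • Z) * δ) j j := (hs.conjTranspose_mul_mul_same δ).diag_nonneg
  have h3 : (δᴴ * Z * δ) j j = ∑ i, (ov hZ.1 h' i j) ^ 2 * hZ.1.eigenvalues i := by
    conv_lhs => rw [← fm_id hZ.1]
    unfold fm ov
    rw [show (h'.eigenvectorUnitary : Matrix (Fin d) (Fin d) ℝ) = δ from rfl]
    generalize (hZ.1.eigenvectorUnitary : Matrix (Fin d) (Fin d) ℝ) = U
    have : δᴴ * (U * diagonal (fun i => hZ.1.eigenvalues i) * Uᴴ) * δ =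
        (Uᴴ * δ)ᴴ * diagonal (fun i => hZ.1.eigenvalues i) * (Uᴴ * δ) := by
      rw [conjTranspose_mul, conjTranspose_conjTranspose]
      simp only [Matrix.mul_assoc]
    rw [this]
    generalize Uᴴ * δ = C
    rw [Matrix.mul_apply]
    refine Finset.sum_congr rfl fun i _ => ?_
    rw [Matrix.mul_diagonal, conjTranspose_apply, star_trivial]
    ring
  have h4 : (δᴴ * (X - t • Z) * δ) j j = (δᴴ * X * δ) j j - t * (δᴴ * Z * δ) j j := by
    simp [Matrix.mul_sub, Matrix.sub_mul]
  have hnn : ∀ i ∈ Finset.univ, 0 ≤ (ov hZ.1 h' i j) ^ 2 * hZ.1.eigenvalues i := fun i _ =>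
    mul_nonneg (sq_nonneg _) (hZ.eigenvalues_nonneg i)
  have h5 : ∑ i, (ov hZ.1 h' i j) ^ 2 * hZ.1.eigenvalues i = 0 := by
    apply le_antisymm _ (Finset.sum_nonneg hnn)
    rw [← h3]
    by_contra hc
    push Not at hc
    have := mul_pos ht hc
    linarith
  exact (Finset.sum_eq_zero_iff_of_nonneg hnn).1 h5 i (Finset.mem_univ _)

lemma scalar {z x : ℝ} (hz : 0 ≤ z) (hx : 0 < x) :
    z + x - 2 * (√z * √x) ≤ (z * Real.log z - z) - z * Real.log x + x := by
  rcases hz.eq_or_lt with rfl | hz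
  · simp
  have hsz := Real.sqrt_pos.2 hz
  have hsx := Real.sqrt_pos.2 hx
  have h1 := Real.log_le_sub_one_of_pos (div_pos hsx hsz)
  rw [Real.log_div hsx.ne' hsz.ne', Real.log_sqrt hx.le, Real.log_sqrt hz.le] at h1
  have h2 : z * (√x / √z) = √z * √x := by
    nth_rewrite 1 [← Real.mul_self_sqrt hz.le]
    field_simp
  have h3 := mul_le_mul_of_nonneg_left h1 hz.le
  rw [mul_sub z (√x / √z), h2] at h3
  linarith

lemma hell {Z X : Matrix (Fin d) (Fin d) ℝ} (hZ : Z.PosSemidef) (hX : X.PosSemidef)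
    {t : ℝ} (ht : 0 < t) (hs : (X - t • Z).PosSemidef) :
    ((fm hZ.1 Real.sqrt - fm hX.1 Real.sqrt) * (fm hZ.1 Real.sqrt - fm hX.1 Real.sqrt)).trace ≤
      matEntropy Z - (Z * fm hX.1 Real.log).trace + X.trace := by
  have hsq : ∀ {W : Matrix (Fin d) (Fin d) ℝ} (hW : W.PosSemidef),
      fm hW.1 Real.sqrt * fm hW.1 Real.sqrt = W := by
    intro W hW
    rw [fm_mul]
    conv_rhs => rw [← fm_id hW.1]
    unfold fm
    congr 3
    funext i
    exact Real.mul_self_sqrt (hW.eigenvalues_nonneg i)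
  have e1 : ((fm hZ.1 Real.sqrt - fm hX.1 Real.sqrt) *
      (fm hZ.1 Real.sqrt - fm hX.1 Real.sqrt)).trace =
      Z.trace + X.trace - 2 * (fm hZ.1 Real.sqrt * fm hX.1 Real.sqrt).trace := by
    rw [Matrix.sub_mul, Matrix.mul_sub, Matrix.mul_sub, hsq hZ, hsq hX]
    simp only [trace_sub]
    rw [Matrix.trace_mul_comm (fm hX.1 Real.sqrt)]
    ring
  have e2 : matEntropy Z =
      (fm hZ.1 (fun x => x * Real.log x - x) * fm hX.1 (fun _ => 1)).trace := by
    rw [fm_one, Matrix.mul_one, fm_trace]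
    unfold matEntropy
    rw [dif_pos hZ.1]
  have e3 : Z.trace = (fm hZ.1 (fun x => x) * fm hX.1 (fun _ => 1)).trace := by
    rw [fm_one, Matrix.mul_one, fm_id]
  have e4 : X.trace = (fm hZ.1 (fun _ => 1) * fm hX.1 (fun x => x)).trace := by
    rw [fm_one, Matrix.one_mul, fm_id]
  have e5 : (Z * fm hX.1 Real.log).trace =
      (fm hZ.1 (fun x => x) * fm hX.1 Real.log).trace := by rw [fm_id]
  rw [e1, e2, e5, e3, e4]
  simp only [tr_fm]
  rw [Finset.mul_sum, ← Finset.sum_add_distrib, ← Finset.sum_sub_distrib,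
    ← Finset.sum_sub_distrib, ← Finset.sum_add_distrib]
  refine Finset.sum_le_sum fun i _ => ?_
  rw [Finset.mul_sum, ← Finset.sum_add_distrib, ← Finset.sum_sub_distrib,
    ← Finset.sum_sub_distrib, ← Finset.sum_add_distrib]
  refine Finset.sum_le_sum fun j _ => ?_
  rcases (hX.eigenvalues_nonneg j).eq_or_lt with h0 | hpos
  · have := ov_zero hZ hX.1 ht hs i j h0.symm
    rw [← h0]
    rcases mul_eq_zero.1 this with h | h <;> rw [h] <;> simp
  · have := mul_le_mul_of_nonneg_left (scalar (hZ.eigenvalues_nonneg i) hpos)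
      (sq_nonneg (ov hZ.1 hX.1 i j))
    linarith

lemma tr_nonneg {B : Matrix (Fin d) (Fin d) ℝ} (hB : B.PosSemidef)
    {W : Matrix (Fin d) (Fin d) ℝ} (hW : W.IsHermitian) : 0 ≤ (B * (W * W)).trace := by
  have := (hB.conjTranspose_mul_mul_same W).trace_nonneg
  rwa [hW.eq, Matrix.mul_assoc, Matrix.trace_mul_comm, Matrix.mul_assoc] at this

lemma half_sub {A : Matrix (Fin d) (Fin d) ℝ} (hA : A.IsHermitian) (h : opNorm A ≤ 1 / 2) :
    ((1 : Matrix (Fin d) (Fin d) ℝ) - (2 : ℝ) • A).PosSemidef := by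
  refine Matrix.PosSemidef.of_dotProduct_mulVec_nonneg
    (Matrix.isHermitian_one.sub (by rw [IsHermitian, conjTranspose_smul, hA.eq]; simp)) fun x => ?_
  have h1 := (Matrix.toEuclideanCLM (𝕜 := ℝ) A).le_opNorm (WithLp.toLp 2 x)
  have h2 := real_inner_le_norm (WithLp.toLp 2 x) (Matrix.toEuclideanCLM (𝕜 := ℝ) A (WithLp.toLp 2 x))
  have h3 : inner ℝ (WithLp.toLp 2 x) (Matrix.toEuclideanCLM (𝕜 := ℝ) A (WithLp.toLp 2 x))
      = x ⬝ᵥ (A *ᵥ x) := by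
    simp [EuclideanSpace.inner_eq_star_dotProduct, dotProduct_comm]
  have h4 : ‖WithLp.toLp 2 x‖ * ‖WithLp.toLp 2 x‖ = x ⬝ᵥ x := by
    rw [← real_inner_self_eq_norm_mul_norm]
    rw [EuclideanSpace.inner_eq_star_dotProduct]
    simp
  have h5 : x ⬝ᵥ (A *ᵥ x) ≤ 1 / 2 * (x ⬝ᵥ x) := by
    rw [← h3, ← h4]
    refine h2.trans ?_
    have h6 := h1.trans (mul_le_mul_of_nonneg_right h (norm_nonneg _))
    have := mul_le_mul_of_nonneg_left h6 (norm_nonneg (WithLp.toLp 2 x))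
    linarith
  simp only [star_trivial, sub_mulVec, one_mulVec, smul_mulVec, dotProduct_sub, dotProduct_smul,
    smul_eq_mul]
  linarith

lemma core {Z X A : Matrix (Fin d) (Fin d) ℝ} (hZ : Z.PosSemidef) (hX : X.PosSemidef)
    (hA : A.PosSemidef) (h : opNorm A ≤ 1 / 2)
    {t : ℝ} (ht : 0 < t) (hs : (X - t • Z).PosSemidef) :
    (A * Z).trace ≤ 2 * (A * X).trace +
      (matEntropy Z - (Z * fm hX.1 Real.log).trace + X.trace) := by
  have hh := hell hZ hX ht hs
  have hsq : ∀ {W : Matrix (Fin d) (Fin d) ℝ} (hW : W.PosSemidef),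
      fm hW.1 Real.sqrt * fm hW.1 Real.sqrt = W := by
    intro W hW
    rw [fm_mul]
    conv_rhs => rw [← fm_id hW.1]
    unfold fm
    congr 3
    funext i
    exact Real.mul_self_sqrt (hW.eigenvalues_nonneg i)
  have hP := fm_herm hZ.1 Real.sqrt
  have hQ := fm_herm hX.1 Real.sqrt
  have eZ := hsq hZ
  have eX := hsq hX
  generalize fm hZ.1 Real.sqrt = P at *
  generalize fm hX.1 Real.sqrt = Q at *
  have h1 := tr_nonneg (half_sub hA.1 h) (hP.sub hQ)
  have h2 := tr_nonneg hA ((hQ.sub (hP.sub hQ)))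
  rw [Matrix.sub_mul, Matrix.one_mul, trace_sub, smul_mul_assoc, trace_smul, smul_eq_mul] at h1
  have e : (Q - (P - Q)) * (Q - (P - Q)) = (2 : ℝ) • X + (2 : ℝ) • ((P - Q) * (P - Q)) - Z := by
    rw [← eZ, ← eX, two_smul, two_smul]
    noncomm_ring
  rw [e, Matrix.mul_sub, Matrix.mul_add, trace_sub, trace_add, mul_smul_comm, mul_smul_comm,
    trace_smul, trace_smul, smul_eq_mul, smul_eq_mul] at h2
  linarith

lemma ent_nonneg {Z X : Matrix (Fin d) (Fin d) ℝ} (hZ : Z.PosSemidef) (hX : X.PosSemidef)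
    {t : ℝ} (ht : 0 < t) (hs : (X - t • Z).PosSemidef) :
    0 ≤ matEntropy Z - (Z * fm hX.1 Real.log).trace + X.trace := by
  have hh := hell hZ hX ht hs
  have := tr_nonneg (Matrix.PosSemidef.one (n := Fin d) (R := ℝ))
    ((fm_herm hZ.1 Real.sqrt).sub (fm_herm hX.1 Real.sqrt))
  rw [Matrix.one_mul] at this
  linarith

lemma ent_eq {X : Matrix (Fin d) (Fin d) ℝ} (hX : X.PosSemidef) :
    matEntropy X = (X * fm hX.1 Real.log).trace - X.trace := by
  have e : X * fm hX.1 Real.log = fm hX.1 (fun x => x * Real.log x) := by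
    rw [← fm_mul, fm_id]
  rw [e, fm_trace]
  conv_rhs => enter [2]; rw [← fm_id hX.1, fm_trace]
  unfold matEntropy
  rw [dif_pos hX.1, Finset.sum_sub_distrib]

end FantopeAux

open FantopeAux in
/-- Refined divergence bound: `V^{r*}_S(S + ηG) ≤ ⟨ηG, ∇r*(S)⟩`. -/
theorem bregman_divergence_rStar_le {d k : ℕ} (hd : 1 ≤ d) (hk1 : 1 ≤ k) (hkd : k ≤ d)
    (S : Matrix (Fin d) (Fin d) ℝ) (hS : S.IsHermitian)
    (G : Matrix (Fin d) (Fin d) ℝ) (hG : G.PosSemidef)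
    (η : ℝ) (hη : 0 < η) (hηG : opNorm (η • G) ≤ 1 / 2)
    (YS : Matrix (Fin d) (Fin d) ℝ) (hYS : YS ∈ Fantope d k)
    (hYSmax : ∀ Z ∈ Fantope d k,
      minner S Z - matEntropy Z ≤ minner S YS - matEntropy YS) :
    rStar d k (S + η • G) - rStar d k S - minner YS (η • G) ≤ minner (η • G) YS := by
  have hA : (η • G).PosSemidef := hG.smul hη.le
  generalize η • G = A at *
  have hcomm : minner YS A = minner A YS := Matrix.trace_mul_comm _ _
  have h1 : minner S YS - matEntropy YS ≤ rStar d k S := by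
    apply le_csSup
    · exact ⟨_, by rintro _ ⟨Z, hZ, rfl⟩; exact hYSmax Z hZ⟩
    · exact ⟨YS, hYS, rfl⟩
  have h2 : rStar d k (S + A) ≤ minner S YS - matEntropy YS + 2 * minner A YS := by
    apply csSup_le (Set.Nonempty.image _ ⟨YS, hYS⟩)
    rintro _ ⟨Z, hZ, rfl⟩
    have key : ∀ t : ℝ, 0 < t → t < 1 → minner (S + A) Z - matEntropy Z ≤
        minner S YS - matEntropy YS + 2 * minner A YS + t * (2 * (minner A Z - minner A YS)) := by
      intro t ht ht1
      obtain ⟨hY1, hY2, hY3⟩ := hYS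
      obtain ⟨hZ1, hZ2, hZ3⟩ := hZ
      have ht' : 0 < 1 - t := by linarith
      obtain ⟨X, hXdef⟩ : ∃ X, X = (1 - t) • YS + t • Z := ⟨_, rfl⟩
      have hX : X.PosSemidef := by
        rw [hXdef]; exact (hY1.smul ht'.le).add (hZ1.smul ht.le)
      have hXtr : X.trace = k := by
        rw [hXdef, Matrix.trace_add, Matrix.trace_smul, Matrix.trace_smul, hY3, hZ3,
          smul_eq_mul, smul_eq_mul]; ring
      have hXF : X ∈ Fantope d k := by
        refine ⟨hX, ?_, hXtr⟩
        have : 1 - X = (1 - t) • (1 - YS) + t • (1 - Z) := by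
          rw [hXdef]; module
        rw [this]; exact (hY2.smul ht'.le).add (hZ2.smul ht.le)
      have hs1 : (X - (1 - t) • YS).PosSemidef := by
        rw [hXdef, add_sub_cancel_left]; exact hZ1.smul ht.le
      have hs2 : (X - t • Z).PosSemidef := by
        rw [hXdef, add_sub_cancel_right]; exact hY1.smul ht'.le
      have a1 := core hZ1 hX hA hηG ht hs2
      have a2 := ent_nonneg hY1 hX ht' hs1
      have a3 := ent_eq hX
      have a4 := hYSmax X hXF
      have a5 : (X * fm hX.1 Real.log).trace = (1 - t) * (YS * fm hX.1 Real.log).trace +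
          t * (Z * fm hX.1 Real.log).trace := by
        generalize fm hX.1 Real.log = L
        rw [hXdef, Matrix.add_mul, Matrix.trace_add, Matrix.smul_mul, Matrix.smul_mul,
          Matrix.trace_smul, Matrix.trace_smul, smul_eq_mul, smul_eq_mul]
      have a6 : ∀ B, (B * X).trace = (1 - t) * (B * YS).trace + t * (B * Z).trace := by
        intro B
        rw [hXdef, Matrix.mul_add, Matrix.trace_add, Matrix.mul_smul, Matrix.mul_smul,
          Matrix.trace_smul, Matrix.trace_smul, smul_eq_mul, smul_eq_mul]
      have a7 : minner (S + A) Z = (S * Z).trace + (A * Z).trace := by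
        rw [minner, Matrix.add_mul, Matrix.trace_add]
      rw [a7]
      unfold minner at *
      rw [a3, a5, a6] at a4
      rw [a6] at a1
      rw [hXtr] at *
      have b2 := mul_le_mul_of_nonneg_left a2 ht'.le
      have b1 := mul_le_mul_of_nonneg_left a1 ht.le
      refine le_of_mul_le_mul_left ?_ ht
      linarith
    have hlim : Filter.Tendsto (fun t : ℝ => minner S YS - matEntropy YS + 2 * minner A YS +
        t * (2 * (minner A Z - minner A YS))) (nhdsWithin 0 (Set.Ioi 0))
        (nhds (minner S YS - matEntropy YS + 2 * minner A YS)) := by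
      have : Continuous (fun t : ℝ => minner S YS - matEntropy YS + 2 * minner A YS +
        t * (2 * (minner A Z - minner A YS))) := by fun_prop
      have := (this.tendsto 0).mono_left (nhdsWithin_le_nhds (s := Set.Ioi (0 : ℝ)))
      simpa using this
    refine ge_of_tendsto hlim ?_
    filter_upwards [Ioo_mem_nhdsGT (zero_lt_one' ℝ)] with t ht
    exact key t ht.1 ht.2
  linarith
end

section
/- Let S be a symmetric d×d matrix at which r* (viewed as a real-valued function on the vector space of symmetric d×d matrices) is twice differentiable. Then for every symmetric positive semidefinite d×d matrix G, the second derivative of r* at S satisfies D²r*(S)[G, G] ≤ ⟨∇r*(S), G²⟩ = Tr(∇r*(S)·G²). -/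
open Finset

attribute [local instance] Matrix.normedAddCommGroup Matrix.normedSpace

lemma scalar_aux (x : ℝ) (hx : 0 < x) :
    0 ≤ Real.log x - 1 + 1 / x - 3 * (x - 1) ^ 2 / (2 * (x * (x + 2))) := by
  set p : ℝ → ℝ := fun x => Real.log x - 1 + 1 / x - 3 * (x - 1) ^ 2 / (2 * (x * (x + 2))) with hp
  have hd : ∀ y : ℝ, 0 < y → HasDerivAt p ((y - 1) ^ 3 / (y ^ 2 * (y + 2) ^ 2)) y := by
    intro y hy
    have h1 := Real.hasDerivAt_log hy.ne'
    have h2 : HasDerivAt (fun x : ℝ => 1 / x) (-(1 / y ^ 2)) y := by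
      simpa [one_div] using hasDerivAt_inv hy.ne'
    have h3 : HasDerivAt (fun x : ℝ => 3 * (x - 1) ^ 2) (3 * (2 * (y - 1))) y := by
      have := (((hasDerivAt_id y).sub_const 1).pow 2).const_mul 3
      simpa using this
    have h4 : HasDerivAt (fun x : ℝ => 2 * (x * (x + 2))) (2 * (1 * (y + 2) + y * 1)) y :=
      ((hasDerivAt_id y).mul ((hasDerivAt_id y).add_const 2)).const_mul 2
    have h5 := ((h1.sub_const 1).add h2).sub (h3.div h4 (by positivity))
    refine h5.congr_deriv ?_
    field_simp
    ring
  have h1 : p 1 = 0 := by simp [hp]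
  change 0 ≤ p x
  rw [← h1]
  rcases le_total 1 x with h | h
  · have hm : MonotoneOn p (Set.Icc 1 x) := by
      apply monotoneOn_of_deriv_nonneg (convex_Icc _ _)
      · intro y hy
        exact (hd y (by linarith [hy.1])).continuousAt.continuousWithinAt
      · intro y hy
        rw [interior_Icc] at hy
        exact (hd y (by linarith [hy.1])).differentiableAt.differentiableWithinAt
      · intro y hy
        rw [interior_Icc] at hy
        rw [(hd y (by linarith [hy.1])).deriv]
        have : 0 ≤ y - 1 := by linarith [hy.1]
        positivity
    exact hm ⟨le_refl _, h⟩ ⟨h, le_refl _⟩ h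
  · have hm : AntitoneOn p (Set.Icc x 1) := by
      apply antitoneOn_of_deriv_nonpos (convex_Icc _ _)
      · intro y hy
        exact (hd y (by linarith [hy.1])).continuousAt.continuousWithinAt
      · intro y hy
        rw [interior_Icc] at hy
        exact (hd y (by linarith [hy.1])).differentiableAt.differentiableWithinAt
      · intro y hy
        rw [interior_Icc] at hy
        rw [(hd y (by linarith [hy.1])).deriv]
        have : y - 1 ≤ 0 := by linarith [hy.2]
        have h3 : (y - 1) ^ 3 ≤ 0 := by
          have : (y-1)^3 = (y-1)^2 * (y-1) := by ring
          rw [this]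
          exact mul_nonpos_of_nonneg_of_nonpos (sq_nonneg _) (by linarith)
        exact div_nonpos_of_nonpos_of_nonneg h3 (by positivity)
    exact hm ⟨le_refl _, h⟩ ⟨h, le_refl _⟩ h

/-- The scalar relative entropy bound. -/
lemma scalar_entropy (z y : ℝ) (hz : 0 ≤ z) (hy : 0 < y) :
    3 * (z - y) ^ 2 ≤ (2 * z + 4 * y) * (z * Real.log z - z * Real.log y - z + y) := by
  rcases hz.eq_or_lt with h | h
  · subst h
    simp; nlinarith [sq_nonneg y]
  · have h1 := scalar_aux (z / y) (by positivity)
    rw [Real.log_div h.ne' hy.ne'] at h1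
    have h2 : Real.log z - Real.log y - 1 + 1 / (z / y) - 3 * (z / y - 1) ^ 2 / (2 * (z / y * (z / y + 2)))
      = ((2 * z + 4 * y) * (z * Real.log z - z * Real.log y - z + y) - 3 * (z - y) ^ 2)
        / (z * (2 * z + 4 * y)) := by
      field_simp
      ring
    rw [h2, le_div_iff₀ (by positivity)] at h1
    linarith

lemma scalar_core (z y V X t s l nu : ℝ) (hz : 0 ≤ z) (hz1 : z ≤ 1) (hy : 0 < y) (hl : 0 ≤ l)
    (hs : s = Real.log y + nu + l) :
    V * V * s * z + t * (V * X * z) - t ^ 2 / 6 * (X * X * z) - V * V * (z * Real.log z - z) ≤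
    V * V * l + nu * (V * V * z) + V * V * y + t * (V * X * y) + t ^ 2 / 3 * (X * X * y) := by
  have h := scalar_entropy z y hz hy
  set h0 := z * Real.log z - z * Real.log y - z + y with hh0
  have hc : 0 < 2 * z + 4 * y := by positivity
  have key : V * (t * X) * (z - y) - (t * X) ^ 2 * (z / 6 + y / 3) ≤ V ^ 2 * h0 := by
    have e1 : 0 ≤ (3 * V * (z - y) - (t * X) * (2 * z + 4 * y) / 2) ^ 2 := sq_nonneg _
    have e2 : V ^ 2 * (3 * (z - y) ^ 2) ≤ V ^ 2 * ((2 * z + 4 * y) * h0) :=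
      mul_le_mul_of_nonneg_left h (sq_nonneg V)
    have e3 : (2 * z + 4 * y) * (V * (t * X) * (z - y) - (t * X) ^ 2 * (z / 6 + y / 3)) ≤
        (2 * z + 4 * y) * (V ^ 2 * h0) := by nlinarith
    exact le_of_mul_le_mul_left e3 hc
  have e4 : 0 ≤ V ^ 2 * l * (1 - z) := by
    have : 0 ≤ 1 - z := by linarith
    positivity
  rw [hs]
  rw [hh0] at key
  nlinarith

lemma oneD (g g' : ℝ → ℝ) (a b c : ℝ) (hg : ∀ᶠ t in nhds 0, HasDerivAt g (g' t) t)
    (hg0 : g' 0 = a) (hg' : HasDerivAt g' b 0) (hle : ∀ t, g t ≤ g 0 + t * a + t ^ 2 * c) :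
    b ≤ 2 * c := by
  by_contra! hb
  set e := (b - 2 * c) / 4 with he
  have hepos : 0 < e := by simp only [he]; linarith
  set f : ℝ → ℝ := fun t => g t - (g 0 + t * a + t ^ 2 * (c + e)) with hf
  have hfd : ∀ᶠ t in nhds 0, HasDerivAt f (g' t - (a + 2 * t * (c + e))) t := by
    filter_upwards [hg] with t ht
    have h1 : HasDerivAt (fun t : ℝ => g 0 + t * a + t ^ 2 * (c + e)) (a + 2 * t * (c + e)) t := by
      have := (((hasDerivAt_id t).mul_const a).const_add (g 0)).add
        (((hasDerivAt_id t).pow 2).mul_const (c + e))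
      exact this.congr_deriv (by simp)
    exact ht.sub h1
  have hdf : deriv f =ᶠ[nhds 0] fun t => g' t - (a + 2 * t * (c + e)) := by
    filter_upwards [hfd] with t ht using ht.deriv
  have hdd : HasDerivAt (fun t => g' t - (a + 2 * t * (c + e))) (b - 2 * (c + e)) 0 := by
    have h1 : HasDerivAt (fun t : ℝ => a + 2 * t * (c + e)) (2 * (c + e)) 0 := by
      have := ((((hasDerivAt_id (0:ℝ)).const_mul 2).mul_const (c + e)).const_add a)
      simpa using this
    exact hg'.sub h1
  have hmin : IsLocalMin f 0 := by
    apply isLocalMin_of_deriv_deriv_pos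
    · rw [hdf.deriv_eq, hdd.deriv]; linarith
    · rw [hdf.self_of_nhds]; simp [hg0]
    · exact hfd.self_of_nhds.continuousAt
  have hf0 : f 0 = 0 := by simp [hf]
  have hneg : ∀ t, t ≠ 0 → f t < 0 := by
    intro t ht
    have := hle t
    have h2 : 0 < t ^ 2 * e := by positivity
    simp only [hf]; linarith
  have : ∀ᶠ t in nhdsWithin (0:ℝ) {0}ᶜ, False := by
    filter_upwards [hmin.filter_mono nhdsWithin_le_nhds, self_mem_nhdsWithin] with t h1 h2
    have := hneg t h2
    rw [hf0] at h1
    linarith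
  exact this.exists.elim (fun _ h => h)

open Matrix in
lemma spectral_form {d : ℕ} {A : Matrix (Fin d) (Fin d) ℝ} (hA : A.IsHermitian) :
    ∃ U : Matrix (Fin d) (Fin d) ℝ, U * Uᵀ = 1 ∧ Uᵀ * U = 1 ∧
      A = U * diagonal hA.eigenvalues * Uᵀ := by
  refine ⟨hA.eigenvectorUnitary, ?_, ?_, ?_⟩
  · have := Unitary.coe_mul_star_self hA.eigenvectorUnitary
    simpa [Matrix.star_eq_conjTranspose] using this
  · have := Unitary.coe_star_mul_self hA.eigenvectorUnitary
    simpa [Matrix.star_eq_conjTranspose] using this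
  · have := hA.spectral_theorem
    simpa [Unitary.conjStarAlgAut_apply, Matrix.star_eq_conjTranspose, Function.comp_def] using this

open Matrix in
lemma trace_mixed {d : ℕ} (U1 U2 M N : Matrix (Fin d) (Fin d) ℝ) (a b : Fin d → ℝ) :
    ((U1 * diagonal a * U1ᵀ) * M * (U2 * diagonal b * U2ᵀ) * Nᵀ).trace =
      ∑ i, ∑ j, (U1ᵀ * M * U2) i j * (U1ᵀ * N * U2) i j * a i * b j := by
  have h : ((U1 * diagonal a * U1ᵀ) * M * (U2 * diagonal b * U2ᵀ) * Nᵀ).trace =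
      ((diagonal a * (U1ᵀ * M * U2) * diagonal b) * (U1ᵀ * N * U2)ᵀ).trace := by
    rw [show (U1 * diagonal a * U1ᵀ) * M * (U2 * diagonal b * U2ᵀ) * Nᵀ =
      U1 * (diagonal a * (U1ᵀ * M * U2) * diagonal b * (U2ᵀ * Nᵀ)) by simp only [Matrix.mul_assoc]]
    rw [Matrix.trace_mul_comm]
    simp only [Matrix.transpose_mul, Matrix.transpose_transpose, Matrix.mul_assoc]
  rw [h]
  simp only [Matrix.trace, Matrix.diag_apply]
  refine Finset.sum_congr rfl fun i _ => ?_
  rw [Matrix.mul_apply]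
  refine Finset.sum_congr rfl fun j _ => ?_
  rw [Matrix.mul_diagonal, Matrix.diagonal_mul, Matrix.transpose_apply]
  ring

open Matrix in
lemma trace_mixed_left {d : ℕ} (U1 U2 M N : Matrix (Fin d) (Fin d) ℝ) (a : Fin d → ℝ)
    (h2 : U2 * U2ᵀ = 1) :
    ((U1 * diagonal a * U1ᵀ) * M * Nᵀ).trace =
      ∑ i, ∑ j, (U1ᵀ * M * U2) i j * (U1ᵀ * N * U2) i j * a i := by
  have := trace_mixed U1 U2 M N a (fun _ => 1)
  simpa [h2] using this

open Matrix in
lemma trace_mixed_right {d : ℕ} (U1 U2 M N : Matrix (Fin d) (Fin d) ℝ) (b : Fin d → ℝ)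
    (h1 : U1 * U1ᵀ = 1) :
    (M * (U2 * diagonal b * U2ᵀ) * Nᵀ).trace =
      ∑ i, ∑ j, (U1ᵀ * M * U2) i j * (U1ᵀ * N * U2) i j * b j := by
  have := trace_mixed U1 U2 M N (fun _ => 1) b
  simpa [h1] using this

open Matrix in
lemma matEntropy_form {d : ℕ} (U : Matrix (Fin d) (Fin d) ℝ) (y : Fin d → ℝ)
    (h2 : Uᵀ * U = 1) :
    matEntropy (U * diagonal y * Uᵀ) = ∑ j, (y j * Real.log (y j) - y j) := by
  have hH : (U * diagonal y * Uᵀ).IsHermitian := by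
    simp [Matrix.IsHermitian, Matrix.mul_assoc]
  have hc : (U * diagonal y * Uᵀ).charpoly = (diagonal y).charpoly := by
    rw [Matrix.mul_assoc, Matrix.charpoly_mul_comm, Matrix.mul_assoc, h2, Matrix.mul_one]
  have hr := hH.roots_charpoly_eq_eigenvalues
  have hm : (∏ i, (Polynomial.X - Polynomial.C (y i))).roots = Multiset.map y Finset.univ.val := by
    rw [← Polynomial.roots_multiset_prod_X_sub_C (Multiset.map y Finset.univ.val),
      Multiset.map_map]
    rfl
  rw [hc, Matrix.charpoly_diagonal, hm] at hr
  have hs := congrArg (fun m => (Multiset.map (fun x : ℝ => x * Real.log x - x) m).sum) hr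
  simp only [Multiset.map_map] at hs
  simp only [matEntropy, hH, dif_pos]
  exact hs.symm

lemma fantope_spectral {d k : ℕ} {Z : Matrix (Fin d) (Fin d) ℝ} (hZ : Z ∈ Fantope d k) :
    ∃ (U : Matrix (Fin d) (Fin d) ℝ) (z : Fin d → ℝ), U * U.transpose = 1 ∧ U.transpose * U = 1 ∧
      Z = U * Matrix.diagonal z * U.transpose ∧ (∀ i, 0 ≤ z i) ∧ (∀ i, z i ≤ 1) ∧
      matEntropy Z = ∑ j, (z j * Real.log (z j) - z j) := by
  obtain ⟨h1, h2, h3⟩ := hZ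
  obtain ⟨U, hU1, hU2, hU⟩ := spectral_form h1.isHermitian
  refine ⟨U, _, hU1, hU2, hU, h1.eigenvalues_nonneg, ?_, by rw [matEntropy]; exact dif_pos h1.isHermitian⟩
  intro i
  have h4 : (U.transpose * (1 - Z) * U).PosSemidef := by
    simpa using h2.conjTranspose_mul_mul_same U
  have h5 : U.transpose * (1 - Z) * U = 1 - Matrix.diagonal h1.isHermitian.eigenvalues := by
    conv_lhs => rw [hU]
    rw [Matrix.mul_sub, Matrix.sub_mul, Matrix.mul_one, hU2]
    congr 1
    calc _ = (U.transpose * U) * Matrix.diagonal h1.isHermitian.eigenvalues * (U.transpose * U) := by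
          simp only [Matrix.mul_assoc]
      _ = _ := by simp [hU2]
  rw [h5] at h4
  have := h4.diag_nonneg (i := i)
  simpa using this

lemma exists_nu {d k : ℕ} (hd : 1 ≤ d) (hk1 : 1 ≤ k) (hkd : k ≤ d) (s : Fin d → ℝ) :
    ∃ nu : ℝ, ∑ b, min 1 (Real.exp (s b - nu)) = (k : ℝ) := by
  have hc : Continuous fun nu : ℝ => ∑ b, min 1 (Real.exp (s b - nu)) := by fun_prop
  have hM : ∀ b, |s b| ≤ ∑ c, |s c| := fun b =>
    Finset.single_le_sum (f := fun c => |s c|) (fun c _ => abs_nonneg _) (Finset.mem_univ b)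
  set M := ∑ c, |s c| with hMdef
  have hd' : (0:ℝ) < d := by exact_mod_cast hd
  refine mem_range_of_exists_le_of_exists_ge hc ⟨M + Real.log d, ?_⟩ ⟨-M, ?_⟩
  · calc ∑ b, min 1 (Real.exp (s b - (M + Real.log d))) ≤ ∑ b : Fin d, (1 / d : ℝ) := by
          refine Finset.sum_le_sum fun b _ => (min_le_right _ _).trans ?_
          calc Real.exp (s b - (M + Real.log d)) ≤ Real.exp (- Real.log d) := by
                apply Real.exp_le_exp.mpr
                linarith [hM b, le_abs_self (s b)]
            _ = 1 / d := by rw [Real.exp_neg, Real.exp_log hd', one_div]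
      _ = 1 := by simp; field_simp
      _ ≤ k := by exact_mod_cast hk1
  · have : ∀ b, min 1 (Real.exp (s b - -M)) = 1 := by
      intro b
      apply min_eq_left
      apply Real.one_le_exp
      linarith [hM b, neg_abs_le (s b)]
    simp only [this]
    simpa using hkd

open Matrix in
lemma exists_upper {d k : ℕ} (hd : 1 ≤ d) (hk1 : 1 ≤ k) (hkd : k ≤ d)
    {S : Matrix (Fin d) (Fin d) ℝ} (hS : S.IsHermitian) :
    ∃ Y ∈ Fantope d k, ∀ G : Matrix (Fin d) (Fin d) ℝ, G.IsHermitian → ∀ t : ℝ,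
      ∀ Z ∈ Fantope d k,
      minner (S + t • G - (t ^ 2 / 6) • (G * G)) Z - matEntropy Z ≤
        (minner S Y - matEntropy Y) + t * (Y * G).trace + t ^ 2 / 3 * (Y * (G * G)).trace := by
  obtain ⟨U, hU1, hU2, hU⟩ := spectral_form hS
  set s := hS.eigenvalues with hs
  obtain ⟨nu, hnu⟩ := exists_nu hd hk1 hkd s
  set y : Fin d → ℝ := fun b => min 1 (Real.exp (s b - nu)) with hy
  have hypos : ∀ b, 0 < y b := fun b => lt_min one_pos (Real.exp_pos _)
  have hy1 : ∀ b, y b ≤ 1 := fun b => min_le_left _ _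
  set l : Fin d → ℝ := fun b => s b - nu - Real.log (y b) with hl
  have hlpos : ∀ b, 0 ≤ l b := by
    intro b
    have : Real.log (y b) ≤ Real.log (Real.exp (s b - nu)) :=
      Real.log_le_log (hypos b) (min_le_right _ _)
    rw [Real.log_exp] at this
    simp only [hl]; linarith
  have hly : ∀ b, l b * y b = l b := by
    intro b
    rcases le_total 1 (Real.exp (s b - nu)) with h | h
    · have : y b = 1 := min_eq_left h
      rw [this, mul_one]
    · have : y b = Real.exp (s b - nu) := min_eq_right h
      have : l b = 0 := by simp [hl, this]
      rw [this, zero_mul]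
  have hse : ∀ b, s b = Real.log (y b) + nu + l b := fun b => by simp only [hl]; ring
  set Y := U * diagonal y * Uᵀ with hY
  have htrY : Y.trace = k := by
    rw [hY, Matrix.trace_mul_comm, ← Matrix.mul_assoc, hU2, Matrix.one_mul, Matrix.trace_diagonal]
    exact hnu
  have hentY : matEntropy Y = ∑ j, (y j * Real.log (y j) - y j) := matEntropy_form U y hU2
  have hYF : Y ∈ Fantope d k := by
    refine ⟨?_, ?_, htrY⟩
    · have : (diagonal y).PosSemidef := Matrix.PosSemidef.diagonal (fun b => (hypos b).le)
      simpa using this.mul_mul_conjTranspose_same U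
    · have : (diagonal (fun b => 1 - y b)).PosSemidef :=
        Matrix.PosSemidef.diagonal (fun b => by have := hy1 b; simpa using this)
      have h2 := this.mul_mul_conjTranspose_same U
      have h3 : (1 : Matrix (Fin d) (Fin d) ℝ) - Y = U * diagonal (fun b => 1 - y b) * Uᴴ := by
        have : diagonal (fun b => 1 - y b) = 1 - diagonal y := by
          rw [← Matrix.diagonal_one, Matrix.diagonal_sub]
        rw [this, Matrix.mul_sub, Matrix.sub_mul, Matrix.mul_one]
        simp [hU1, hY]
      rw [h3]; exact h2
  have hval : minner S Y - matEntropy Y = ∑ b, l b + nu * k + ∑ b, y b := by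
    have h1 : minner S Y = ∑ b, s b * y b := by
      have : S * Y = U * (diagonal s * diagonal y * Uᵀ) := by
        rw [hU, hY]
        calc _ = U * diagonal s * (Uᵀ * U) * diagonal y * Uᵀ := by simp only [Matrix.mul_assoc]
          _ = _ := by rw [hU2]; simp only [Matrix.mul_assoc, Matrix.one_mul]
      rw [minner, this, Matrix.trace_mul_comm, Matrix.mul_assoc, hU2, Matrix.mul_one,
        Matrix.diagonal_mul_diagonal, Matrix.trace_diagonal]
    rw [h1, hentY, ← hnu, Finset.mul_sum, ← Finset.sum_sub_distrib, ← Finset.sum_add_distrib,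
      ← Finset.sum_add_distrib]
    refine Finset.sum_congr rfl fun b _ => ?_
    have h2 := hse b
    have h3 := hly b
    change s b * y b - (y b * Real.log (y b) - y b) = l b + nu * y b + y b
    rw [← h3]
    nth_rewrite 1 [h2]
    ring
  refine ⟨Y, hYF, fun G hG t Z hZ => ?_⟩
  obtain ⟨W, z, hW1, hW2, hWZ, hz0, hz1, hent⟩ := fantope_spectral hZ
  have hGt : Gᵀ = G := by simpa using hG.eq
  set V := Wᵀ * 1 * U with hV
  set X := Wᵀ * G * U with hX
  have e1 : (S * Z).trace = ∑ i, ∑ j, V i j * V i j * z i * s j := by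
    have := trace_mixed W U 1 1 z s
    rw [← hWZ, ← hU] at this
    rw [Matrix.trace_mul_comm, ← this]; simp
  have e2 : (G * Z).trace = ∑ i, ∑ j, V i j * X i j * z i := by
    have := trace_mixed_left W U 1 G z hU1
    rw [← hWZ, hGt] at this
    rw [Matrix.trace_mul_comm, ← this]; simp
  have e3 : (G * G * Z).trace = ∑ i, ∑ j, X i j * X i j * z i := by
    have := trace_mixed_left W U G G z hU1
    rw [← hWZ, hGt] at this
    rw [Matrix.trace_mul_comm, ← this, Matrix.mul_assoc]
  have e4 : (Y * G).trace = ∑ i, ∑ j, V i j * X i j * y j := by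
    have := trace_mixed_right W U 1 G y hW1
    rw [← hY, hGt] at this
    rw [← this]; simp
  have e5 : (Y * (G * G)).trace = ∑ i, ∑ j, X i j * X i j * y j := by
    have := trace_mixed_right W U G G y hW1
    rw [← hY, hGt] at this
    rw [← this, ← Matrix.mul_assoc, Matrix.trace_mul_comm (Y * G), ← Matrix.mul_assoc]
  have eR : ∀ b : Fin d → ℝ, ∑ j, b j = ∑ i, ∑ j, V i j * V i j * b j := by
    intro b
    have := trace_mixed_right W U 1 1 b hW1
    rw [← this, Matrix.one_mul, Matrix.transpose_one, Matrix.mul_one, Matrix.trace_mul_comm,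
      ← Matrix.mul_assoc, hU2, Matrix.one_mul, Matrix.trace_diagonal]
  have eL : ∀ b : Fin d → ℝ, ∑ i, b i = ∑ i, ∑ j, V i j * V i j * b i := by
    intro b
    have := trace_mixed_left W U 1 1 b hU1
    rw [← this, Matrix.mul_one, Matrix.transpose_one, Matrix.mul_one, Matrix.trace_mul_comm,
      ← Matrix.mul_assoc, hW2, Matrix.one_mul, Matrix.trace_diagonal]
  have e6 : (k : ℝ) = ∑ i, ∑ j, V i j * V i j * z i := by
    rw [← eL, ← hZ.2.2, hWZ, Matrix.trace_mul_comm,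
      ← Matrix.mul_assoc, hW2, Matrix.one_mul, Matrix.trace_diagonal]
  have e7 : minner (S + t • G - (t ^ 2 / 6) • (G * G)) Z =
      (S * Z).trace + t * (G * Z).trace - t ^ 2 / 6 * (G * G * Z).trace := by
    simp [minner, Matrix.add_mul, Matrix.sub_mul]
  rw [e7, hval, hent, e1, e2, e3, e4, e5, e6, eL (fun i => z i * Real.log (z i) - z i), eR l, eR y]
  simp only [Finset.mul_sum, ← Finset.sum_sub_distrib, ← Finset.sum_add_distrib]
  refine Finset.sum_le_sum fun i _ => Finset.sum_le_sum fun j _ => ?_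
  have := scalar_core (z i) (y j) (V i j) (X i j) t (s j) (l j) nu (hz0 i) (hz1 i) (hypos j)
    (hlpos j) (hse j)
  linarith

lemma fantope_entry {d k : ℕ} {Z : Matrix (Fin d) (Fin d) ℝ} (hZ : Z ∈ Fantope d k)
    (i j : Fin d) : |Z i j| ≤ 1 := by
  obtain ⟨W, z, hW1, hW2, hWZ, hz0, hz1, hent⟩ := fantope_spectral hZ
  have hn : ∀ i, ∑ a, W i a * W i a = 1 := by
    intro i
    have := congrFun (congrFun hW1 i) i
    simpa [Matrix.mul_apply] using this
  have h1 : Z i j = ∑ a, W i a * z a * W j a := by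
    rw [hWZ, Matrix.mul_apply]
    simp [Matrix.mul_diagonal]
  rw [h1]
  calc |∑ a, W i a * z a * W j a| ≤ ∑ a, |W i a * z a * W j a| := Finset.abs_sum_le_sum_abs _ _
    _ ≤ ∑ a, (W i a * W i a + W j a * W j a) / 2 := by
        refine Finset.sum_le_sum fun a _ => ?_
        rw [abs_mul, abs_mul, abs_of_nonneg (hz0 a)]
        have h2 : |W i a| * z a * |W j a| ≤ |W i a| * |W j a| := by
          have := mul_le_mul_of_nonneg_left (hz1 a) (mul_nonneg (abs_nonneg (W i a)) (abs_nonneg (W j a)))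
          linarith
        nlinarith [sq_nonneg (|W i a| - |W j a|), abs_mul_abs_self (W i a), abs_mul_abs_self (W j a)]
    _ = 1 := by
        rw [← Finset.sum_div, Finset.sum_add_distrib, hn, hn]; norm_num

lemma minner_le {d k : ℕ} {Z : Matrix (Fin d) (Fin d) ℝ} (hZ : Z ∈ Fantope d k)
    (H : Matrix (Fin d) (Fin d) ℝ) : minner H Z ≤ (d * d : ℝ) * ‖H‖ := by
  have h : minner H Z = ∑ i, ∑ j, H i j * Z j i := by
    simp [minner, Matrix.trace, Matrix.mul_apply]
  rw [h]
  calc ∑ i, ∑ j, H i j * Z j i ≤ ∑ i : Fin d, ∑ j : Fin d, ‖H‖ := by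
        refine Finset.sum_le_sum fun i _ => Finset.sum_le_sum fun j _ => ?_
        calc H i j * Z j i ≤ |H i j * Z j i| := le_abs_self _
          _ = |H i j| * |Z j i| := abs_mul _ _
          _ ≤ ‖H‖ * 1 := by
              have := Matrix.norm_entry_le_entrywise_sup_norm H (i := i) (j := j)
              rw [Real.norm_eq_abs] at this
              exact mul_le_mul this (fantope_entry hZ j i) (abs_nonneg _) (norm_nonneg _)
          _ = ‖H‖ := mul_one _
    _ = _ := by simp; ring

lemma entropy_ge {d k : ℕ} {Z : Matrix (Fin d) (Fin d) ℝ} (hZ : Z ∈ Fantope d k) :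
    -(d : ℝ) ≤ matEntropy Z := by
  obtain ⟨W, z, hW1, hW2, hWZ, hz0, hz1, hent⟩ := fantope_spectral hZ
  rw [hent]
  calc -(d : ℝ) = ∑ j : Fin d, (-1 : ℝ) := by simp
    _ ≤ _ := by
      refine Finset.sum_le_sum fun j _ => ?_
      have h := scalar_entropy (z j) 1 (hz0 j) one_pos
      have h2 : 0 ≤ (2 * z j + 4 * 1) * (z j * Real.log (z j) - z j * Real.log 1 - z j + 1) :=
        le_trans (by positivity) h
      have h3 := nonneg_of_mul_nonneg_right h2 (by linarith [hz0 j])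
      simp at h3
      linarith

lemma rStar_bdd {d k : ℕ} (S : Matrix (Fin d) (Fin d) ℝ) :
    BddAbove ((fun Y => minner S Y - matEntropy Y) '' Fantope d k) := by
  refine ⟨(d * d : ℝ) * ‖S‖ + d, ?_⟩
  rintro _ ⟨Z, hZ, rfl⟩
  have h1 := minner_le hZ S
  have h2 := entropy_ge hZ
  simp only
  linarith

lemma le_rStar {d k : ℕ} (S : Matrix (Fin d) (Fin d) ℝ) {Z : Matrix (Fin d) (Fin d) ℝ}
    (hZ : Z ∈ Fantope d k) : minner S Z - matEntropy Z ≤ rStar d k S :=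
  le_csSup (rStar_bdd S) ⟨Z, hZ, rfl⟩

lemma rStar_le {d k : ℕ} (S : Matrix (Fin d) (Fin d) ℝ) {c : ℝ} (hne : (Fantope d k).Nonempty)
    (h : ∀ Z ∈ Fantope d k, minner S Z - matEntropy Z ≤ c) : rStar d k S ≤ c := by
  apply csSup_le (hne.image _)
  rintro _ ⟨Z, hZ, rfl⟩
  exact h Z hZ

lemma minner_add {d : ℕ} (A B Z : Matrix (Fin d) (Fin d) ℝ) :
    minner (A + B) Z = minner A Z + minner B Z := by
  simp [minner, Matrix.add_mul]

lemma rStar_lip {d k : ℕ} (hne : (Fantope d k).Nonempty) :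
    LipschitzWith (d * d : NNReal) (rStar d k) := by
  apply LipschitzWith.of_le_add_mul
  intro A B
  apply rStar_le _ hne
  intro Z hZ
  have h1 := le_rStar B hZ
  have h2 := minner_le hZ (A - B)
  have h3 := minner_add B (A - B) Z
  rw [add_sub_cancel] at h3
  rw [dist_eq_norm]
  push_cast
  linarith

lemma rStar_shift {d k : ℕ} (hne : (Fantope d k).Nonempty) (S : Matrix (Fin d) (Fin d) ℝ) (t : ℝ) :
    rStar d k (S + t • 1) = rStar d k S + t * k := by
  have hm : ∀ (t : ℝ), ∀ Z ∈ Fantope d k, minner (t • 1) Z = t * k := by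
    intro t Z hZ
    simp [minner, hZ.2.2]
  apply le_antisymm
  · apply rStar_le _ hne
    intro Z hZ
    rw [minner_add, hm t Z hZ]
    linarith [le_rStar S hZ]
  · have : rStar d k S ≤ rStar d k (S + t • 1) - t * k := by
      apply rStar_le _ hne
      intro Z hZ
      have := le_rStar (S + t • 1) hZ
      rw [minner_add, hm t Z hZ] at this
      linarith
    linarith

lemma fderiv_rStar_one {d k : ℕ} (hne : (Fantope d k).Nonempty) (S : Matrix (Fin d) (Fin d) ℝ)
    (hS : DifferentiableAt ℝ (rStar d k) S) : fderiv ℝ (rStar d k) S 1 = k := by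
  have h1 := hS.hasFDerivAt.hasLineDerivAt 1
  have h2 : HasLineDerivAt ℝ (rStar d k) (k : ℝ) S 1 := by
    have h3 : (fun t : ℝ => rStar d k (S + t • 1)) = fun t => rStar d k S + t * k := by
      funext t; exact rStar_shift hne S t
    unfold HasLineDerivAt
    rw [h3]
    have := ((hasDerivAt_id (0:ℝ)).mul_const (k:ℝ)).const_add (rStar d k S)
    simpa using this
  exact HasDerivAt.unique h1 h2

lemma dense_diff_gen {E : Type*} [NormedAddCommGroup E] [NormedSpace ℝ E] [FiniteDimensional ℝ E]
    {f : E → ℝ} {C : NNReal} (hf : LipschitzWith C f) : Dense {A | DifferentiableAt ℝ f A} := by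
  let _ : MeasurableSpace E := borel E
  have : BorelSpace E := ⟨rfl⟩
  exact MeasureTheory.Measure.dense_of_ae
    (hf.ae_differentiableAt (μ := MeasureTheory.Measure.addHaar))

lemma dense_diff {d k : ℕ} (hne : (Fantope d k).Nonempty) :
    Dense {A | DifferentiableAt ℝ (rStar d k) A} := by
  have h : FiniteDimensional ℝ (Matrix (Fin d) (Fin d) ℝ) := inferInstance
  exact @dense_diff_gen (Matrix (Fin d) (Fin d) ℝ) _ _ h _ _ (rStar_lip hne)

lemma eventually_diff {d k : ℕ} (hk1 : 1 ≤ k) (hne : (Fantope d k).Nonempty)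
    (S : Matrix (Fin d) (Fin d) ℝ) (hc : ContinuousAt (fderiv ℝ (rStar d k)) S) :
    ∀ᶠ A in nhds S, DifferentiableAt ℝ (rStar d k) A := by
  have hk0 : (0:ℝ) < k := by exact_mod_cast hk1
  have hc1 : ContinuousAt (fun A => fderiv ℝ (rStar d k) A 1) S := hc.clm_apply continuousAt_const
  have hS : fderiv ℝ (rStar d k) S 1 = k := by
    have hf : ∃ᶠ A in nhds S, DifferentiableAt ℝ (rStar d k) A :=
      mem_closure_iff_frequently.mp (dense_diff hne S)
    by_contra hne'
    have h1 : ∀ᶠ A in nhds S, fderiv ℝ (rStar d k) A 1 ≠ k := hc1.eventually_ne hne'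
    obtain ⟨A, hA, hA'⟩ := (hf.and_eventually h1).exists
    exact hA' (fderiv_rStar_one hne A hA)
  have h2 : ∀ᶠ A in nhds S, fderiv ℝ (rStar d k) A 1 ≠ 0 := by
    apply hc1.eventually_ne
    rw [hS]; exact hk0.ne'
  filter_upwards [h2] with A hA
  by_contra h
  rw [fderiv_zero_of_not_differentiableAt h] at hA
  simp at hA

lemma fderiv_max {d k : ℕ} (S Y : Matrix (Fin d) (Fin d) ℝ) (hY : Y ∈ Fantope d k)
    (hS : DifferentiableAt ℝ (rStar d k) S) (hmax : rStar d k S ≤ minner S Y - matEntropy Y)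
    (H : Matrix (Fin d) (Fin d) ℝ) : fderiv ℝ (rStar d k) S H = (Y * H).trace := by
  have h1 : HasDerivAt (fun t : ℝ => rStar d k (S + t • H)) (fderiv ℝ (rStar d k) S H) 0 :=
    hS.hasFDerivAt.hasLineDerivAt H
  have h2 : HasDerivAt (fun t : ℝ => rStar d k (S + t • H) - t * (Y * H).trace)
      (fderiv ℝ (rStar d k) S H - (Y * H).trace) 0 := by
    have := (hasDerivAt_id (0:ℝ)).mul_const (Y * H).trace
    exact h1.sub (this.congr_deriv (by simp))
  have h3 : IsLocalMin (fun t : ℝ => rStar d k (S + t • H) - t * (Y * H).trace) 0 := by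
    refine Filter.Eventually.of_forall fun t => ?_
    have h4 := le_rStar (S + t • H) hY
    rw [minner_add] at h4
    have h5 : minner (t • H) Y = t * (Y * H).trace := by
      rw [Matrix.trace_mul_comm]; simp [minner]
    simp only [zero_smul, add_zero, zero_mul, sub_zero]
    linarith
  linarith [h3.hasDerivAt_eq_zero h2]


lemma calculus_gen {E : Type*} [NormedAddCommGroup E] [NormedSpace ℝ E]
    (f : E → ℝ) (S G B : E) (c : ℝ) (hev : ∀ᶠ A in nhds S, DifferentiableAt ℝ f A)
    (htwice : DifferentiableAt ℝ (fderiv ℝ f) S)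
    (hle : ∀ t : ℝ, f (S + t • G - (t ^ 2 / 6) • B) ≤ f S + t * fderiv ℝ f S G + t ^ 2 * c) :
    fderiv ℝ (fderiv ℝ f) S G G ≤ 2 * c + fderiv ℝ f S B / 3 := by
  set q : ℝ → E := fun t => S + t • G - (t ^ 2 / 6) • B with hq
  have hq0 : q 0 = S := by simp [hq]
  have hqd : ∀ t, HasDerivAt q (G - (t / 3) • B) t := by
    intro t
    have h1 := ((hasDerivAt_id t).smul_const G).const_add S
    have h2 := ((((hasDerivAt_id t).pow 2).div_const 6).smul_const B)
    refine (h1.sub h2).congr_deriv ?_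
    simp only [one_smul, id]
    congr 2
    push_cast
    ring
  have hqc : Filter.Tendsto q (nhds 0) (nhds S) := by
    have := (hqd 0).continuousAt.tendsto
    rwa [hq0] at this
  have hmain := oneD (fun t => f (q t)) (fun t => fderiv ℝ f (q t) (G - (t / 3) • B))
    (fderiv ℝ f S G) (fderiv ℝ (fderiv ℝ f) S G G - fderiv ℝ f S B / 3) c ?_ ?_ ?_ ?_
  · linarith
  · filter_upwards [hqc.eventually hev] with t ht
    exact ht.hasFDerivAt.comp_hasDerivAt t (hqd t)
  · simp [hq0]
  · have h1 : HasDerivAt (fun t => fderiv ℝ f (q t)) (fderiv ℝ (fderiv ℝ f) S G) 0 := by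
      have h2 : HasFDerivAt (fderiv ℝ f) (fderiv ℝ (fderiv ℝ f) S) (q 0) := by
        rw [hq0]; exact htwice.hasFDerivAt
      have := h2.comp_hasDerivAt 0 (hqd 0)
      exact this.congr_deriv (by simp)
    have h3 : HasDerivAt (fun t : ℝ => G - (t / 3) • B) (-((1 / 3 : ℝ) • B)) 0 :=
      (((hasDerivAt_id (0:ℝ)).div_const 3).smul_const B).const_sub G
    refine (h1.clm_apply h3).congr_deriv ?_
    rw [hq0, map_neg, map_smul]
    simp
    ring
  · intro t
    simp only [hq0]
    exact hle t

/-- Hessian bound: if `r*` is twice differentiable at the symmetric matrix `S`, then for every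
positive semidefinite `G`, `D²r*(S)[G, G] ≤ ⟨∇r*(S), G²⟩`. -/
theorem hessian_rStar_quadratic_form_le (d k : ℕ) (hd : 1 ≤ d) (hk1 : 1 ≤ k) (hkd : k ≤ d)
    (S : Matrix (Fin d) (Fin d) ℝ) (hS : S.IsHermitian)
    (htwice : DifferentiableAt ℝ (fderiv ℝ (rStar d k)) S)
    (YS : Matrix (Fin d) (Fin d) ℝ) (hYS : YS ∈ Fantope d k)
    (hYSmax : ∀ Z ∈ Fantope d k,
      minner S Z - matEntropy Z ≤ minner S YS - matEntropy YS)
    (G : Matrix (Fin d) (Fin d) ℝ) (hG : G.PosSemidef) :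
    fderiv ℝ (fderiv ℝ (rStar d k)) S G G ≤ (YS * (G * G)).trace := by
  have hne : (Fantope d k).Nonempty := ⟨YS, hYS⟩
  obtain ⟨Y, hY, hup⟩ := exists_upper hd hk1 hkd hS
  have hev := eventually_diff hk1 hne S htwice.continuousAt
  have hdS := hev.self_of_nhds
  have hF := fderiv_max S YS hYS hdS (rStar_le S hne hYSmax)
  have hYmax : rStar d k S ≤ minner S Y - matEntropy Y := by
    apply rStar_le S hne
    intro Z hZ
    simpa using hup G hG.isHermitian 0 Z hZ
  have hF' := fderiv_max S Y hY hdS hYmax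
  have hle : ∀ t : ℝ, rStar d k (S + t • G - (t ^ 2 / 6) • (G * G)) ≤
      rStar d k S + t * fderiv ℝ (rStar d k) S G + t ^ 2 * ((Y * (G * G)).trace / 3) := by
    intro t
    rw [hF']
    apply rStar_le _ hne
    intro Z hZ
    have h1 := hup G hG.isHermitian t Z hZ
    have h2 := le_rStar S hY
    linarith
  have hmain := calculus_gen (rStar d k) S G (G * G) _ hev htwice hle
  have e1 := hF (G * G)
  have e2 := hF' (G * G)
  have e3 : fderiv ℝ (fderiv ℝ (rStar d k)) S G G ≤
    2 * ((Y * (G * G)).trace / 3) + fderiv ℝ (rStar d k) S (G * G) / 3 := hmain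
  linarith
end
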